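/- Let u, v, w ∈ ℝ^d be unit vectors, set a := ⟨u, w⟩ and b := ⟨v, w⟩, and assume a ≠ 0 and b ≠ 0. Let Π := I_d − wwᵀ be the orthogonal projection onto the complement of w. Then ‖(1/a)·Πu − (1/b)·Πv‖₂² = (1/a − 1/b)² + ‖u − v‖₂²/(a·b). In particular, if a > 0 and b > 0 then ‖(1/a)·Πu − (1/b)·Πv‖₂² ≥ ‖u − v‖₂²/(a·b). -/

import Mathlib

/-- The Euclidean norm on `ℝ^n`. -/
noncomputable def e2norm {n : ℕ} (v : Fin n → ℝ) : ℝ := Real.sqrt (∑ i, v i ^ 2)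

/-!
Since `a = ⟨u, w⟩`, scaling by `1 / a` sends `Πu = u - a w` to `u / a - w`; in the difference of the
two scaled projections the `w`-terms cancel and `u / a - v / b` remains. Expanding its squared norm
and eliminating `⟨u, v⟩` through `‖u - v‖²` gives the identity, because `‖u‖ = ‖v‖`.
-/

open scoped RealInnerProductSpace

theorem one_div_smul_sub_smul {G M : Type*} [GroupWithZero G] [AddGroup M]
    [DistribMulAction G M] {a : G} (ha : a ≠ 0) (x y : M) :
    (1 / a) • (x - a • y) = (1 / a) • x - y := by
  rw [smul_sub, one_div, inv_smul_smul₀ ha]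

section RealInner

variable {E : Type*} [SeminormedAddCommGroup E] [InnerProductSpace ℝ E]

theorem norm_smul_sub_smul_sq (s t : ℝ) (x y : E) :
    ‖s • x - t • y‖ ^ 2 = (s - t) * (s * ‖x‖ ^ 2 - t * ‖y‖ ^ 2) + s * t * ‖x - y‖ ^ 2 := by
  simp only [norm_sub_sq_real, norm_smul, mul_pow, Real.norm_eq_abs, sq_abs, real_inner_smul_left,
    real_inner_smul_right]
  ring

theorem norm_smul_sub_smul_sq_of_norm_eq {x y : E} (h : ‖x‖ = ‖y‖) (s t : ℝ) :
    ‖s • x - t • y‖ ^ 2 = (s - t) ^ 2 * ‖x‖ ^ 2 + s * t * ‖x - y‖ ^ 2 := by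
  rw [norm_smul_sub_smul_sq, ← h]
  ring

theorem stmt18_general {u v : E} (huv : ‖u‖ = ‖v‖) (w : E) {a b : ℝ}
    (ha : a = ⟪u, w⟫) (hb : b = ⟪v, w⟫) (ha0 : a ≠ 0) (hb0 : b ≠ 0) :
    ‖(1 / a) • (u - ⟪w, u⟫ • w) - (1 / b) • (v - ⟪w, v⟫ • w)‖ ^ 2
        = (1 / a - 1 / b) ^ 2 * ‖u‖ ^ 2 + ‖u - v‖ ^ 2 / (a * b) ∧
      (0 < a → 0 < b →
        ‖u - v‖ ^ 2 / (a * b) ≤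
          ‖(1 / a) • (u - ⟪w, u⟫ • w) - (1 / b) • (v - ⟪w, v⟫ • w)‖ ^ 2) := by
  have identity : ‖(1 / a) • (u - ⟪w, u⟫ • w) - (1 / b) • (v - ⟪w, v⟫ • w)‖ ^ 2
      = (1 / a - 1 / b) ^ 2 * ‖u‖ ^ 2 + ‖u - v‖ ^ 2 / (a * b) := by
    rw [real_inner_comm u w, real_inner_comm v w, ← ha, ← hb, one_div_smul_sub_smul ha0,
      one_div_smul_sub_smul hb0, sub_sub_sub_cancel_right, norm_smul_sub_smul_sq_of_norm_eq huv,
      one_div_mul_one_div, one_div_mul_eq_div]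
  refine ⟨identity, fun _ _ => ?_⟩
  rw [identity]
  exact le_add_of_nonneg_left (by positivity)

end RealInner

theorem e2norm_eq_norm_toLp {n : ℕ} (x : Fin n → ℝ) : e2norm x = ‖WithLp.toLp 2 x‖ := by
  simp only [e2norm, EuclideanSpace.norm_eq, Real.norm_eq_abs, sq_abs]

theorem sum_mul_eq_inner_toLp {ι : Type*} [Fintype ι] (x y : ι → ℝ) :
    ∑ i, x i * y i = ⟪WithLp.toLp 2 x, WithLp.toLp 2 y⟫ := by
  rw [EuclideanSpace.inner_toLp_toLp, star_trivial, dotProduct_comm, dotProduct]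

/-- For unit vectors `u, v, w` with `a = ⟨u,w⟩ ≠ 0`, `b = ⟨v,w⟩ ≠ 0`, and
`Π = I − wwᵀ`: `‖(1/a)Πu − (1/b)Πv‖² = (1/a − 1/b)² + ‖u − v‖²/(ab)`; in particular, if
`a, b > 0` then `‖(1/a)Πu − (1/b)Πv‖² ≥ ‖u − v‖²/(ab)`. -/
theorem stmt18 (d : ℕ) (u v w : Fin d → ℝ)
    (hu : e2norm u = 1) (hv : e2norm v = 1) (hw : e2norm w = 1)
    (a b : ℝ) (ha : a = ∑ i, u i * w i) (hb : b = ∑ i, v i * w i)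
    (ha0 : a ≠ 0) (hb0 : b ≠ 0) :
    (e2norm ((1 / a) • (u - (∑ i, w i * u i) • w) - (1 / b) • (v - (∑ i, w i * v i) • w)) ^ 2
        = (1 / a - 1 / b) ^ 2 + e2norm (u - v) ^ 2 / (a * b)) ∧
      (0 < a → 0 < b →
        e2norm (u - v) ^ 2 / (a * b) ≤
          e2norm ((1 / a) • (u - (∑ i, w i * u i) • w)
            - (1 / b) • (v - (∑ i, w i * v i) • w)) ^ 2) := by
  simp only [e2norm_eq_norm_toLp, sum_mul_eq_inner_toLp, WithLp.toLp_sub, WithLp.toLp_smul]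
    at hu hv ha hb ⊢
  simpa only [hu, one_pow, mul_one] using
    stmt18_general (hu.trans hv.symm) (WithLp.toLp 2 w) ha hb ha0 hb0
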